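/- Let n ≥ 1, s > 0, q ∈ [1,∞], and p, p₁ ∈ [1,∞) with p < p₁ ≤ 2p and s > n(2/p₁ − 1/p). Then there is a constant C > 0 such that for all Schwartz functions f, g on ℝⁿ, ‖fg‖_{B^s_{p,q}} ≤ C ‖f‖_{B^s_{p₁,q}} ‖g‖_{B^s_{p₁,q}}. -/

import Mathlib

open MeasureTheory Real Filter
open scoped ENNReal FourierTransform

noncomputable section

/-- `ℝⁿ` as a Euclidean space. -/
abbrev Rn (n : ℕ) : Type := EuclideanSpace ℝ (Fin n)

variable {n : ℕ}

/-- The Fourier transform of a real-valued Schwartz function, viewed as a ℂ-valued function. -/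
def ftC (f : SchwartzMap (Rn n) ℝ) : Rn n → ℂ :=
  𝓕 (fun x => (f x : ℂ))

/-- `ψ₀` is a Littlewood–Paley function: an even, radial Schwartz function whose Fourier
transform is nonnegative, supported in the annulus `{ξ : 1/2 < ‖ξ‖ < 2}`, and satisfies
`∑_{j ∈ ℤ} ψ̂₀(2^{-j} ξ) = 1` for `ξ ≠ 0`. -/
structure IsLPF (n : ℕ) (ψ₀ : SchwartzMap (Rn n) ℝ) : Prop where
  even : ∀ x : Rn n, ψ₀ (-x) = ψ₀ x
  radial : ∀ x y : Rn n, ‖x‖ = ‖y‖ → ψ₀ x = ψ₀ y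
  ft_im : ∀ ξ : Rn n, (ftC ψ₀ ξ).im = 0
  ft_nonneg : ∀ ξ : Rn n, 0 ≤ (ftC ψ₀ ξ).re
  ft_supp : ∀ ξ : Rn n, ftC ψ₀ ξ ≠ 0 → 1/2 < ‖ξ‖ ∧ ‖ξ‖ < 2
  ft_sum : ∀ ξ : Rn n, ξ ≠ 0 → HasSum (fun j : ℤ => ftC ψ₀ ((2:ℝ) ^ (-j) • ξ)) 1

/-- The Littlewood–Paley kernel `ψ_j(x) = 2^{jn} ψ₀(2^j x)`, whose Fourier transform is
`ψ̂₀(2^{-j} ξ)`. -/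
def lpKernel (ψ₀ : SchwartzMap (Rn n) ℝ) (j : ℤ) (x : Rn n) : ℝ :=
  (2:ℝ) ^ (j * (n:ℤ)) * ψ₀ ((2:ℝ) ^ j • x)

/-- The Littlewood–Paley projection `Δ_j f = ψ_j ∗ f`. -/
def lpProj (ψ₀ : SchwartzMap (Rn n) ℝ) (j : ℤ) (f : Rn n → ℝ) : Rn n → ℝ :=
  MeasureTheory.convolution (lpKernel ψ₀ j) f (ContinuousLinearMap.mul ℝ ℝ) volume

/-- `S_j f = ∑_{m ≤ j} Δ_m f`, the low-frequency cutoff; this is the L² function whose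
Fourier transform is `(∑_{m ≤ j} ψ̂₀(2^{-m} ξ)) f̂(ξ)`. -/
def lowProj (ψ₀ : SchwartzMap (Rn n) ℝ) (j : ℤ) (f : Rn n → ℝ) (x : Rn n) : ℝ :=
  ∑' m : ℤ, if m ≤ j then lpProj ψ₀ m f x else 0

/-- `Ψ` is the low-frequency piece of the Littlewood–Paley decomposition:
`Ψ̂ = 1 − ∑_{k ≥ 0} ψ̂_k`. -/
def IsLowPiece (ψ₀ Ψ : SchwartzMap (Rn n) ℝ) : Prop :=
  ∀ ξ : Rn n, ftC Ψ ξ = 1 - ∑' k : ℕ, ftC ψ₀ ((2:ℝ) ^ (-(k:ℤ)) • ξ)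

/-- The inhomogeneous Besov norm `‖f‖_{B^s_{p,q}}`, valued in `[0,∞]`:
`‖Ψ∗f‖_{L^p} + (∑_{j ≥ 0} (2^{js} ‖Δ_j f‖_{L^p})^q)^{1/q}`, with the supremum over `j`
replacing the `ℓ^q` sum when `q = ∞`. -/
def besovNorm (ψ₀ Ψ : SchwartzMap (Rn n) ℝ) (s : ℝ) (p q : ℝ≥0∞) (f : Rn n → ℝ) : ℝ≥0∞ :=
  eLpNorm (MeasureTheory.convolution (fun x => Ψ x) f (ContinuousLinearMap.mul ℝ ℝ) volume)
      p volume +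
    (if q = ∞ then
      ⨆ j : ℕ, ENNReal.ofReal ((2:ℝ) ^ ((j:ℝ) * s)) * eLpNorm (lpProj ψ₀ (j:ℤ) f) p volume
    else
      (∑' j : ℕ, (ENNReal.ofReal ((2:ℝ) ^ ((j:ℝ) * s)) *
        eLpNorm (lpProj ψ₀ (j:ℤ) f) p volume) ^ q.toReal) ^ (1 / q.toReal))

/-- The heat semigroup `e^{tΔ} f = h_t ∗ f` with `h_t(x) = (4πt)^{-n/2} e^{-‖x‖²/(4t)}`. -/
def heatOp (n : ℕ) (t : ℝ) (f : Rn n → ℝ) : Rn n → ℝ :=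
  MeasureTheory.convolution
    (fun x : Rn n => (4 * π * t) ^ (-(n:ℝ)/2) * Real.exp (-‖x‖^2 / (4*t))) f
    (ContinuousLinearMap.mul ℝ ℝ) volume

/-- The partial derivative `∂_{x_i} f`. -/
def pderiv' (i : Fin n) (f : Rn n → ℝ) (x : Rn n) : ℝ :=
  fderiv ℝ f x (EuclideanSpace.single i 1)

/-- The Laplacian `Δf = ∑ᵢ ∂²_{x_i} f`. -/
def lapl (f : Rn n → ℝ) (x : Rn n) : ℝ :=
  ∑ i : Fin n, pderiv' i (pderiv' i f) x

/-! Writing `S_N` for the low-frequency cutoffs, `f g = lim S_N f · S_N g` telescopes into the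
series of `S_{j+1} f · Δ_j g + S_j g · Δ_j f`, whose `j`-th term has spectrum in a ball of radius
`≲ 2^j`. With `1/r = 1/p - 1/p₁`, Hölder's inequality bounds this term in `L^p` by
`sup_N ‖S_N f‖_{L^r} ‖Δ_j g‖_{L^{p₁}}` plus the symmetric expression, and `B^s_{p₁,q} ⊆ L^r` by Bernstein's
inequality because `s > n (1/p₁ - 1/r)`. Since `s > 0`, only the terms `j ≥ k - 1` matter for the
`k`-th block of the series, with a geometric gain `2^{(k-j)s}`, so a discrete Young inequality in
`ℓ^q` sums them up. -/

section LpInequalities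

variable {α β : Type*} [MeasurableSpace α] [MeasurableSpace β]

lemma lintegral_mul_rpow_le {ν : Measure β} {k b : β → ℝ≥0∞} (hk : AEMeasurable k ν)
    (hb : AEMeasurable b ν) {q : ℝ} (hq : 1 ≤ q) :
    (∫⁻ y, k y * b y ∂ν) ^ q ≤ (∫⁻ y, k y ∂ν) ^ (q - 1) * ∫⁻ y, k y * b y ^ q ∂ν := by
  have hq₀ : 0 < q := by linarith
  have hθ : 0 ≤ 1 - q⁻¹ := sub_nonneg.2 (inv_le_one_of_one_le₀ hq)
  have hsplit (y : β) : k y * b y = k y ^ (1 - q⁻¹) * (k y * b y ^ q) ^ q⁻¹ := by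
    rw [ENNReal.mul_rpow_of_nonneg _ _ (by positivity), ← mul_assoc,
      ← ENNReal.rpow_add_of_nonneg _ _ hθ (by positivity), sub_add_cancel, ENNReal.rpow_one,
      ENNReal.rpow_rpow_inv hq₀.ne']
  calc (∫⁻ y, k y * b y ∂ν) ^ q
      ≤ ((∫⁻ y, k y ∂ν) ^ (1 - q⁻¹) * (∫⁻ y, k y * b y ^ q ∂ν) ^ q⁻¹) ^ q := by
        simp_rw [hsplit]
        gcongr
        exact ENNReal.lintegral_mul_norm_pow_le hk (hk.mul (hb.pow_const q)) hθ (by positivity)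
          (sub_add_cancel _ _)
    _ = (∫⁻ y, k y ∂ν) ^ (q - 1) * ∫⁻ y, k y * b y ^ q ∂ν := by
        rw [ENNReal.mul_rpow_of_nonneg _ _ hq₀.le, ENNReal.rpow_inv_rpow hq₀.ne',
          ← ENNReal.rpow_mul, sub_mul, inv_mul_cancel₀ hq₀.ne', one_mul]

lemma lintegral_rpow_lintegral_mul_le {μ : Measure α} {ν : Measure β} [SFinite μ] [SFinite ν]
    {k : α → β → ℝ≥0∞} (hk : Measurable (Function.uncurry k)) {b : β → ℝ≥0∞} (hb : Measurable b)
    {A : ℝ≥0∞} (hrow : ∀ x, ∫⁻ y, k x y ∂ν ≤ A) (hcol : ∀ y, ∫⁻ x, k x y ∂μ ≤ A)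
    {q : ℝ} (hq : 1 ≤ q) :
    ∫⁻ x, (∫⁻ y, k x y * b y ∂ν) ^ q ∂μ ≤ A ^ q * ∫⁻ y, b y ^ q ∂ν := by
  have hkb : Measurable (Function.uncurry fun x y => k x y * b y ^ q) :=
    hk.mul ((hb.comp measurable_snd).pow_const q)
  calc ∫⁻ x, (∫⁻ y, k x y * b y ∂ν) ^ q ∂μ
      ≤ ∫⁻ x, A ^ (q - 1) * ∫⁻ y, k x y * b y ^ q ∂ν ∂μ := by
        have : 0 ≤ q - 1 := by linarith
        refine lintegral_mono fun x => (lintegral_mul_rpow_le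
          hk.of_uncurry_left.aemeasurable hb.aemeasurable hq).trans ?_
        gcongr
        exact hrow x
    _ = A ^ (q - 1) * ∫⁻ y, (∫⁻ x, k x y ∂μ) * b y ^ q ∂ν := by
        rw [lintegral_const_mul _ hkb.lintegral_prod_right,
          lintegral_lintegral_swap hkb.aemeasurable]
        simp_rw [lintegral_mul_const _ hk.of_uncurry_right]
    _ ≤ A ^ (q - 1) * ∫⁻ y, A * b y ^ q ∂ν := by
        gcongr with y
        exact hcol y
    _ = A ^ q * ∫⁻ y, b y ^ q ∂ν := by
        rw [lintegral_const_mul _ (hb.pow_const _), ← mul_assoc]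
        nth_rw 2 [← ENNReal.rpow_one A]
        rw [← ENNReal.rpow_add_of_nonneg _ _ (by linarith) zero_le_one, sub_add_cancel]

/-- **Schur's test**. -/
theorem eLpNorm_lintegral_mul_le {μ : Measure α} {ν : Measure β} [SFinite μ] [SFinite ν]
    {k : α → β → ℝ≥0∞} (hk : Measurable (Function.uncurry k)) {b : β → ℝ≥0∞} (hb : Measurable b)
    {A : ℝ≥0∞} (hrow : ∀ x, ∫⁻ y, k x y ∂ν ≤ A) (hcol : ∀ y, ∫⁻ x, k x y ∂μ ≤ A)
    {q : ℝ≥0∞} (hq : 1 ≤ q) :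
    eLpNorm (fun x => ∫⁻ y, k x y * b y ∂ν) q μ ≤ A * eLpNorm b q ν := by
  rcases eq_or_ne q ∞ with rfl | hq_top
  · rw [eLpNorm_exponent_top, eLpNorm_exponent_top]
    refine eLpNormEssSup_le_of_ae_enorm_bound (Eventually.of_forall fun x => ?_)
    calc ∫⁻ y, k x y * b y ∂ν ≤ ∫⁻ y, k x y * eLpNormEssSup b ν ∂ν := by
          refine lintegral_mono_ae ((ENNReal.ae_le_essSup b).mono fun y hy => ?_)
          gcongr
          exact hy
      _ = (∫⁻ y, k x y ∂ν) * eLpNormEssSup b ν := lintegral_mul_const _ hk.of_uncurry_left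
      _ ≤ A * eLpNormEssSup b ν := by gcongr; exact hrow x
  · have hq₀ : q ≠ 0 := (zero_lt_one.trans_le hq).ne'
    have hq₁ : 1 ≤ q.toReal := by simpa using ENNReal.toReal_mono hq_top hq
    rw [eLpNorm_eq_lintegral_rpow_enorm_toReal hq₀ hq_top,
      eLpNorm_eq_lintegral_rpow_enorm_toReal hq₀ hq_top]
    simp only [enorm_eq_self]
    calc _ ≤ (A ^ q.toReal * ∫⁻ y, b y ^ q.toReal ∂ν) ^ (1 / q.toReal) := by
          gcongr
          exact lintegral_rpow_lintegral_mul_le hk hb hrow hcol hq₁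
      _ = _ := by
          rw [ENNReal.mul_rpow_of_nonneg _ _ (by positivity), one_div,
            ENNReal.rpow_rpow_inv (by positivity)]

lemma eLpNorm_const_mul_le {μ : Measure α} (c : ℝ≥0∞) {b : α → ℝ≥0∞} (hb : AEMeasurable b μ)
    (q : ℝ≥0∞) : eLpNorm (fun x => c * b x) q μ ≤ c * eLpNorm b q μ := by
  rcases eq_or_ne q 0 with rfl | hq₀
  · simp
  rcases eq_or_ne q ∞ with rfl | hq_top
  · rw [eLpNorm_exponent_top, eLpNorm_exponent_top]
    exact ENNReal.essSup_const_mul.le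
  have : 0 < q.toReal := ENNReal.toReal_pos hq₀ hq_top
  simp only [eLpNorm_eq_lintegral_rpow_enorm_toReal hq₀ hq_top, enorm_eq_self, one_div,
    ENNReal.mul_rpow_of_nonneg _ _ this.le]
  rw [lintegral_const_mul'' _ (hb.pow_const _), ENNReal.mul_rpow_of_nonneg _ _ (by positivity),
    ENNReal.rpow_rpow_inv this.ne']

lemma eLpNorm_le_eLpNorm_top_rpow_mul {E : Type*} [NormedAddCommGroup E] {μ : Measure α}
    {f : α → E} (hf : AEStronglyMeasurable f μ) {a r : ℝ≥0∞} (ha : a ≠ 0) (har : a ≤ r) :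
    eLpNorm f r μ ≤ eLpNorm f ∞ μ ^ (1 - (a / r).toReal) * eLpNorm f a μ ^ (a / r).toReal := by
  rcases eq_or_ne r ∞ with rfl | hr_top
  · simp [ENNReal.div_top]
  have ha_top : a ≠ ∞ := ne_top_of_le_ne_top hr_top har
  have hr : r ≠ 0 := (ha.bot_lt.trans_le har).ne'
  have ha' : 0 < a.toReal := ENNReal.toReal_pos ha ha_top
  have hr' : 0 < r.toReal := ENNReal.toReal_pos hr hr_top
  have har' : 0 ≤ r.toReal - a.toReal := sub_nonneg.2 (ENNReal.toReal_mono hr_top har)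
  have hpow : ∫⁻ x, ‖f x‖ₑ ^ r.toReal ∂μ
      ≤ eLpNorm f ∞ μ ^ (r.toReal - a.toReal) * ∫⁻ x, ‖f x‖ₑ ^ a.toReal ∂μ := by
    rw [← lintegral_const_mul'' _ (hf.enorm.pow_const _)]
    refine lintegral_mono_ae ((enorm_ae_le_eLpNormEssSup f μ).mono fun x hx => ?_)
    rw [← sub_add_cancel r.toReal a.toReal, ENNReal.rpow_add_of_nonneg _ _ har' ha'.le,
      add_sub_cancel_right, eLpNorm_exponent_top]
    gcongr
  rw [eLpNorm_eq_lintegral_rpow_enorm_toReal hr hr_top,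
    eLpNorm_eq_lintegral_rpow_enorm_toReal ha ha_top, ENNReal.toReal_div, ← ENNReal.rpow_mul]
  calc _ ≤ (eLpNorm f ∞ μ ^ (r.toReal - a.toReal) *
        ∫⁻ x, ‖f x‖ₑ ^ a.toReal ∂μ) ^ (1 / r.toReal) := by gcongr
    _ = _ := by
      rw [ENNReal.mul_rpow_of_nonneg _ _ (by positivity), ← ENNReal.rpow_mul]
      congr 2 <;> field_simp

end LpInequalities

section Convolution

variable {G : Type*} [AddCommGroup G] [MeasurableSpace G] [MeasurableAdd₂ G] [MeasurableNeg G]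
  {μ : Measure G} [μ.IsAddLeftInvariant] [μ.IsNegInvariant]

lemma enorm_convolution_mul_le (K f : G → ℝ) (x : G) :
    ‖MeasureTheory.convolution K f (ContinuousLinearMap.mul ℝ ℝ) μ x‖ₑ
      ≤ ∫⁻ y, ‖K (x - y)‖ₑ * ‖f y‖ₑ ∂μ := by
  rw [convolution_eq_swap]
  refine (enorm_integral_le_lintegral_enorm _).trans_eq ?_
  simp only [ContinuousLinearMap.mul_apply', enorm_mul]

/-- **Young's inequality** `L¹ ∗ Lᵖ ⊆ Lᵖ`. -/
theorem eLpNorm_convolution_mul_le [SFinite μ] {K f : G → ℝ} (hK : Measurable K)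
    (hf : Measurable f) {p : ℝ≥0∞} (hp : 1 ≤ p) :
    eLpNorm (MeasureTheory.convolution K f (ContinuousLinearMap.mul ℝ ℝ) μ) p μ
      ≤ eLpNorm K 1 μ * eLpNorm f p μ := by
  rw [eLpNorm_one_eq_lintegral_enorm, ← eLpNorm_enorm f]
  refine (eLpNorm_mono_enorm fun x => ?_).trans (eLpNorm_lintegral_mul_le
    (k := fun x y => ‖K (x - y)‖ₑ) (hK.enorm.comp measurable_sub) hf.enorm
    (fun x => (lintegral_sub_left_eq_self (‖K ·‖ₑ) x).le)
    (fun y => (lintegral_sub_right_eq_self (‖K ·‖ₑ) y).le) hp)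
  exact enorm_convolution_mul_le K f x

lemma enorm_convolution_mul_le_eLpNorm_mul_eLpNorm {a b : ℝ≥0∞} [ENNReal.HolderConjugate a b]
    {K f : G → ℝ} (hK : Measurable K) (hf : Measurable f) (x : G) :
    ‖MeasureTheory.convolution K f (ContinuousLinearMap.mul ℝ ℝ) μ x‖ₑ
      ≤ eLpNorm K a μ * eLpNorm f b μ := by
  have hmp : MeasurePreserving (fun y => x - y) μ μ := μ.measurePreserving_sub_left x
  calc ‖MeasureTheory.convolution K f (ContinuousLinearMap.mul ℝ ℝ) μ x‖ₑ
      ≤ ∫⁻ y, ‖K (x - y)‖ₑ * ‖f y‖ₑ ∂μ := enorm_convolution_mul_le K f x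
    _ = eLpNorm ((K ∘ fun y => x - y) • f) 1 μ := by
        simp only [eLpNorm_one_eq_lintegral_enorm, smul_eq_mul, Pi.mul_apply,
          Function.comp_apply, enorm_mul]
    _ ≤ eLpNorm (K ∘ fun y => x - y) a μ * eLpNorm f b μ :=
        eLpNorm_smul_le_mul_eLpNorm hf.aestronglyMeasurable
          (hK.comp hmp.measurable).aestronglyMeasurable
    _ = eLpNorm K a μ * eLpNorm f b μ := by
        rw [eLpNorm_comp_measurePreserving hK.aestronglyMeasurable hmp]

end Convolution

section SequenceSpaces

lemma eLpNorm_count_tsum_int_sub_le (w : ℤ → ℝ≥0∞) (b : ℕ → ℝ≥0∞) {q : ℝ≥0∞} (hq : 1 ≤ q) :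
    eLpNorm (fun k : ℕ => ∑' j : ℕ, w (j - k) * b j) q Measure.count
      ≤ (∑' z, w z) * eLpNorm b q Measure.count := by
  have hrow (k : ℕ) : ∑' j : ℕ, w (j - k) ≤ ∑' z, w z :=
    ENNReal.tsum_comp_le_tsum_of_injective (f := fun j : ℕ => (j - k : ℤ))
      (fun _ _ h => by simpa using h) w
  have hcol (j : ℕ) : ∑' k : ℕ, w (j - k) ≤ ∑' z, w z :=
    ENNReal.tsum_comp_le_tsum_of_injective (f := fun k : ℕ => (j - k : ℤ))
      (fun _ _ h => by simpa using h) w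
  simpa only [lintegral_count] using eLpNorm_lintegral_mul_le (μ := Measure.count)
    (ν := Measure.count) (k := fun k j : ℕ => w (j - k)) Measurable.of_discrete
    (Measurable.of_discrete (f := b)) (by simpa only [lintegral_count] using hrow)
    (by simpa only [lintegral_count] using hcol) hq

lemma eLpNorm_count_eq_tsum (b : ℕ → ℝ≥0∞) {q : ℝ≥0∞} (hq₀ : q ≠ 0) (hq : q ≠ ∞) :
    eLpNorm b q Measure.count = (∑' j, b j ^ q.toReal) ^ (1 / q.toReal) := by
  simp only [eLpNorm_eq_lintegral_rpow_enorm_toReal hq₀ hq, lintegral_count, enorm_eq_self]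

lemma eLpNorm_top_count_eq_iSup (b : ℕ → ℝ≥0∞) : eLpNorm b ∞ Measure.count = ⨆ j, b j := by
  simp only [eLpNorm_exponent_top, eLpNormEssSup_count, enorm_eq_self]

lemma eLpNorm_count_le_add_eLpNorm_succ (b : ℕ → ℝ≥0∞) {q : ℝ≥0∞} (hq : 1 ≤ q) :
    eLpNorm b q Measure.count ≤ b 0 + eLpNorm (fun j => b (j + 1)) q Measure.count := by
  rcases eq_or_ne q ∞ with rfl | hq_top
  · simp only [eLpNorm_top_count_eq_iSup]
    refine iSup_le fun j => ?_
    cases j with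
    | zero => exact le_self_add
    | succ j => exact (le_iSup (fun j => b (j + 1)) j).trans le_add_self
  · have hq₀ : q ≠ 0 := (zero_lt_one.trans_le hq).ne'
    have hq₁ : 1 ≤ q.toReal := by simpa using ENNReal.toReal_mono hq_top hq
    rw [eLpNorm_count_eq_tsum _ hq₀ hq_top, eLpNorm_count_eq_tsum _ hq₀ hq_top,
      tsum_eq_zero_add' ENNReal.summable]
    set S := ∑' j, b (j + 1) ^ q.toReal
    calc (b 0 ^ q.toReal + S) ^ (1 / q.toReal)
        = (b 0 ^ q.toReal + (S ^ (1 / q.toReal)) ^ q.toReal) ^ (1 / q.toReal) := by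
          rw [one_div, ENNReal.rpow_inv_rpow (by positivity)]
      _ ≤ b 0 + S ^ (1 / q.toReal) := ENNReal.rpow_add_rpow_le_add _ _ hq₁

/-- The weight `2^{-zs}` on integers `z ≥ -1`, extended by zero: it measures the contribution of
a function of frequency `≲ 2^j` to the `k`-th dyadic block, as a function of `z = j - k`. -/
def decayWeight (s : ℝ) (z : ℤ) : ℝ≥0∞ := if -1 ≤ z then 2 ^ (-z * s) else 0

lemma two_rpow_ne_top (t : ℝ) : (2 : ℝ≥0∞) ^ t ≠ ∞ :=
  ENNReal.rpow_ne_top_of_ne_zero two_ne_zero ENNReal.ofNat_ne_top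

lemma ofReal_two_rpow (t : ℝ) : ENNReal.ofReal (2 ^ t) = (2 : ℝ≥0∞) ^ t := by
  rw [← ENNReal.ofReal_rpow_of_pos two_pos, ENNReal.ofReal_ofNat]

lemma two_rpow_add (t u : ℝ) : (2 : ℝ≥0∞) ^ (t + u) = 2 ^ t * 2 ^ u :=
  ENNReal.rpow_add t u two_ne_zero ENNReal.ofNat_ne_top

lemma tsum_two_rpow_mul_ne_top {t : ℝ} (ht : t < 0) : ∑' j : ℕ, (2 : ℝ≥0∞) ^ (j * t) ≠ ∞ := by
  simp_rw [mul_comm _ t, ENNReal.rpow_mul, ENNReal.rpow_natCast]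
  rw [ENNReal.tsum_geometric, ENNReal.inv_ne_top]
  exact (tsub_pos_of_lt (ENNReal.rpow_lt_one_of_one_lt_of_neg ENNReal.one_lt_two ht)).ne'

lemma tsum_decayWeight_ne_top {s : ℝ} (hs : 0 < s) : ∑' z, decayWeight s z ≠ ∞ := by
  have hinj : Function.Injective fun m : ℕ => (m - 1 : ℤ) := fun _ _ h => by simpa using h
  have hsupp : Function.support (decayWeight s) ⊆ Set.range fun m : ℕ => (m - 1 : ℤ) := by
    intro z hz
    have hz' : -1 ≤ z := by
      by_contra h
      simp [decayWeight, h] at hz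
    exact ⟨(z + 1).toNat, by dsimp only; omega⟩
  have hterm (m : ℕ) : decayWeight s (m - 1) = 2 ^ s * 2 ^ (m * -s) := by
    rw [decayWeight, if_pos (by omega), ← two_rpow_add]
    congr 1
    push_cast
    ring
  rw [← hinj.tsum_eq hsupp]
  simp_rw [hterm, ENNReal.tsum_mul_left]
  exact ENNReal.mul_ne_top (two_rpow_ne_top s) (tsum_two_rpow_mul_ne_top (neg_lt_zero.2 hs))

end SequenceSpaces

section Schwartz

/-- A real-valued Schwartz function viewed as a complex-valued one, so that the Fourier theory of
`SchwartzMap` applies to it. -/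
def complexify : SchwartzMap (Rn n) ℝ →L[ℝ] SchwartzMap (Rn n) ℂ :=
  SchwartzMap.postcompCLM Complex.ofRealCLM

lemma complexify_apply (f : SchwartzMap (Rn n) ℝ) (x : Rn n) : complexify f x = (f x : ℂ) := rfl

lemma ftC_eq_fourier_complexify (f : SchwartzMap (Rn n) ℝ) :
    ftC f = ⇑(𝓕 (complexify f) : SchwartzMap (Rn n) ℂ) := rfl

lemma ftC_injective : Function.Injective (ftC : SchwartzMap (Rn n) ℝ → Rn n → ℂ) := by
  intro f g h
  have hF : 𝓕 (complexify f) = 𝓕 (complexify g) := DFunLike.coe_injective h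
  have hC : complexify f = complexify g := by simpa using congrArg (fun u => 𝓕⁻ u) hF
  ext x
  simpa only [complexify_apply, Complex.ofReal_inj] using DFunLike.congr_fun hC x

lemma ftC_add (f g : SchwartzMap (Rn n) ℝ) : ftC (f + g) = ftC f + ftC g := by
  simp only [ftC_eq_fourier_complexify, map_add, FourierTransform.fourier_add]
  rfl

lemma ftC_zero : ftC (0 : SchwartzMap (Rn n) ℝ) = 0 := by
  simpa using ftC_add (0 : SchwartzMap (Rn n) ℝ) 0

lemma ftC_apply_zero (f : SchwartzMap (Rn n) ℝ) : ftC f 0 = ((∫ x, f x : ℝ) : ℂ) := by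
  rw [ftC, Real.fourier_eq, ← integral_complex_ofReal]
  simp

/-- The pointwise product of two real Schwartz functions. -/
def schwartzMul (f g : SchwartzMap (Rn n) ℝ) : SchwartzMap (Rn n) ℝ :=
  SchwartzMap.pairing (ContinuousLinearMap.mul ℝ ℝ) f g

lemma coe_schwartzMul (f g : SchwartzMap (Rn n) ℝ) : ⇑(schwartzMul f g) = ⇑f * ⇑g := rfl

/-- The convolution of two real Schwartz functions as a Schwartz function: the real part of the
convolution of their complexifications. -/
def schwartzConv (f g : SchwartzMap (Rn n) ℝ) : SchwartzMap (Rn n) ℝ :=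
  (SchwartzMap.convolution (ContinuousLinearMap.mul ℂ ℂ) (complexify f)
    (complexify g)).postcompCLM Complex.reCLM

lemma convolution_complexify_apply (f g : SchwartzMap (Rn n) ℝ) (x : Rn n) :
    SchwartzMap.convolution (ContinuousLinearMap.mul ℂ ℂ) (complexify f) (complexify g) x =
      ((MeasureTheory.convolution f g (ContinuousLinearMap.mul ℝ ℝ) volume x : ℝ) : ℂ) := by
  simp only [SchwartzMap.convolution_apply, MeasureTheory.convolution, ← integral_complex_ofReal,
    ContinuousLinearMap.mul_apply', complexify_apply, Complex.ofReal_mul]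

lemma coe_schwartzConv (f g : SchwartzMap (Rn n) ℝ) :
    ⇑(schwartzConv f g) =
      MeasureTheory.convolution f g (ContinuousLinearMap.mul ℝ ℝ) volume := by
  ext x
  rw [schwartzConv, SchwartzMap.postcompCLM_apply, convolution_complexify_apply]
  exact Complex.ofReal_re _

lemma ftC_schwartzConv (f g : SchwartzMap (Rn n) ℝ) : ftC (schwartzConv f g) = ftC f * ftC g := by
  have hC : complexify (schwartzConv f g) =
      SchwartzMap.convolution (ContinuousLinearMap.mul ℂ ℂ) (complexify f) (complexify g) := by
    ext x
    rw [complexify_apply, coe_schwartzConv, convolution_complexify_apply]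
  rw [ftC_eq_fourier_complexify, hC, SchwartzMap.fourier_convolution]
  rfl

lemma fourier_fourier_neg_apply (h : SchwartzMap (Rn n) ℂ) (x : Rn n) : 𝓕 (𝓕 h) (-x) = h x := by
  have hinv : 𝓕⁻ (𝓕 h) x = h x := by simp
  rw [← hinv, SchwartzMap.fourierInv_coe, Real.fourierInv_eq_fourier_neg]
  rfl

lemma ftC_schwartzMul (f g : SchwartzMap (Rn n) ℝ) :
    ftC (schwartzMul f g) = MeasureTheory.convolution (ftC f) (ftC g)
      (ContinuousLinearMap.mul ℂ ℂ) volume := by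
  have hinv : SchwartzMap.convolution (ContinuousLinearMap.mul ℂ ℂ) (𝓕 (complexify f))
      (𝓕 (complexify g)) = 𝓕⁻ (𝓕 (SchwartzMap.convolution (ContinuousLinearMap.mul ℂ ℂ)
      (𝓕 (complexify f)) (𝓕 (complexify g)))) := by simp
  ext ξ
  rw [ftC_eq_fourier_complexify f, ftC_eq_fourier_complexify g, ← SchwartzMap.convolution_apply,
    hinv, SchwartzMap.fourier_convolution, SchwartzMap.fourierInv_coe,
    Real.fourierInv_eq_fourier_comp_neg, ftC]
  refine congrFun (congrArg _ (funext fun x => ?_)) ξ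
  rw [SchwartzMap.pairing_apply_apply, fourier_fourier_neg_apply, fourier_fourier_neg_apply]
  exact Complex.ofReal_mul _ _

lemma schwartzConv_add_left (f g h : SchwartzMap (Rn n) ℝ) :
    schwartzConv (f + g) h = schwartzConv f h + schwartzConv g h :=
  ftC_injective (by simp only [ftC_schwartzConv, ftC_add, add_mul])

lemma schwartzConv_add_right (f g h : SchwartzMap (Rn n) ℝ) :
    schwartzConv f (g + h) = schwartzConv f g + schwartzConv f h :=
  ftC_injective (by simp only [ftC_schwartzConv, ftC_add, mul_add])

lemma schwartzConv_sum_right {ι : Type*} (K : SchwartzMap (Rn n) ℝ) (t : Finset ι)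
    (u : ι → SchwartzMap (Rn n) ℝ) :
    schwartzConv K (∑ i ∈ t, u i) = ∑ i ∈ t, schwartzConv K (u i) :=
  map_sum (AddMonoidHom.mk' (schwartzConv K) (schwartzConv_add_right K)) u t

/-- The `L¹`-normalized dilation `x ↦ 2^{jn} K(2^j x)` as a Schwartz function. -/
def dilate (K : SchwartzMap (Rn n) ℝ) (j : ℤ) : SchwartzMap (Rn n) ℝ :=
  (2 : ℝ) ^ (j * (n : ℤ)) • SchwartzMap.compCLMOfContinuousLinearEquiv ℝ
    (ContinuousLinearEquiv.smulLeft (Units.mk0 ((2 : ℝ) ^ j) (by positivity))) K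

lemma coe_dilate (K : SchwartzMap (Rn n) ℝ) (j : ℤ) : ⇑(dilate K j) = lpKernel K j := rfl

lemma dilate_zero (K : SchwartzMap (Rn n) ℝ) : dilate K 0 = K := by
  ext x
  simp [coe_dilate, lpKernel]

lemma integral_dilate_smul {E : Type*} [NormedAddCommGroup E] [NormedSpace ℝ E]
    (K : SchwartzMap (Rn n) ℝ) (j : ℤ) (φ : Rn n → E) :
    ∫ x, dilate K j x • φ x = ∫ x, K x • φ ((2 : ℝ) ^ (-j) • x) := by
  have hj : (2 : ℝ) ^ (-j) * 2 ^ j = 1 := by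
    rw [← zpow_add₀ two_ne_zero, neg_add_cancel, zpow_zero]
  have hvol : (2 : ℝ) ^ (j * (n : ℤ)) * |(((2 : ℝ) ^ j) ^ Module.finrank ℝ (Rn n))⁻¹| = 1 := by
    rw [finrank_euclideanSpace_fin, abs_of_pos (by positivity), zpow_mul, zpow_natCast]
    exact mul_inv_cancel₀ (by positivity)
  calc ∫ x, dilate K j x • φ x
      = (2 : ℝ) ^ (j * (n : ℤ)) •
          ∫ x, K ((2 : ℝ) ^ j • x) • φ ((2 : ℝ) ^ (-j) • (2 : ℝ) ^ j • x) := by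
        rw [← integral_smul]
        simp only [coe_dilate, lpKernel, smul_smul, hj, one_smul]
    _ = ∫ x, K x • φ ((2 : ℝ) ^ (-j) • x) := by
        rw [Measure.integral_comp_smul volume (fun x => K x • φ ((2 : ℝ) ^ (-j) • x)),
          smul_smul, hvol, one_smul]

lemma ftC_dilate (K : SchwartzMap (Rn n) ℝ) (j : ℤ) (ξ : Rn n) :
    ftC (dilate K j) ξ = ftC K ((2 : ℝ) ^ (-j) • ξ) := by
  have hsmul (f : SchwartzMap (Rn n) ℝ) (η : Rn n) :
      ftC f η = ∫ x, f x • (𝐞 (-inner ℝ x η) : ℂ) := by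
    simp only [ftC, Real.fourier_eq, Circle.smul_def, smul_eq_mul, Complex.real_smul, mul_comm]
  rw [hsmul, hsmul, integral_dilate_smul]
  simp only [real_inner_smul_left, real_inner_smul_right]

lemma schwartzConv_dilate_apply (K f : SchwartzMap (Rn n) ℝ) (j : ℤ) (x : Rn n) :
    schwartzConv (dilate K j) f x = ∫ u, K u * f (x - (2 : ℝ) ^ (-j) • u) := by
  rw [coe_schwartzConv]
  exact integral_dilate_smul K j fun u => f (x - u)

lemma eLpNorm_dilate (K : SchwartzMap (Rn n) ℝ) (j : ℤ) (b : ℝ≥0∞) :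
    eLpNorm (dilate K j) b volume =
      (2 : ℝ≥0∞) ^ (j * n * (1 - (b⁻¹).toReal)) * eLpNorm K b volume := by
  have hj : (2 : ℝ) ^ j ≠ 0 := by positivity
  have hscale : |(((2 : ℝ) ^ j) ^ Module.finrank ℝ (Rn n))⁻¹| = 2 ^ (-(j * n) : ℝ) := by
    rw [finrank_euclideanSpace_fin, abs_of_pos (by positivity), Real.rpow_neg zero_le_two,
      Real.rpow_mul zero_le_two, Real.rpow_intCast, Real.rpow_natCast]
  have hconst : ‖(2 : ℝ) ^ (j * (n : ℤ))‖ₑ = 2 ^ (j * n : ℝ) := by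
    rw [Real.enorm_of_nonneg (by positivity), ← ofReal_two_rpow, ← Real.rpow_intCast]
    push_cast
    rfl
  have hemb : MeasurableEmbedding fun x : Rn n => (2 : ℝ) ^ j • x :=
    (Homeomorph.smulOfNeZero ((2 : ℝ) ^ j) hj).measurableEmbedding
  calc eLpNorm (dilate K j) b volume
      = ‖(2 : ℝ) ^ (j * (n : ℤ))‖ₑ * eLpNorm (K ∘ fun x => (2 : ℝ) ^ j • x) b volume :=
        eLpNorm_const_smul _ _ _ _
    _ = 2 ^ (j * n : ℝ) * ((2 ^ (-(j * n) : ℝ)) ^ (b⁻¹).toReal * eLpNorm K b volume) := by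
        rw [hconst, ← hemb.eLpNorm_map_measure, Measure.map_addHaar_smul _ hj, hscale,
          ofReal_two_rpow, eLpNorm_smul_measure_of_ne_zero, one_div, smul_eq_mul]
        exact (ENNReal.rpow_pos two_pos ENNReal.ofNat_ne_top).ne'
    _ = _ := by
        rw [← mul_assoc, ← ENNReal.rpow_mul, ← two_rpow_add]
        congr 2
        ring

lemma eLpNorm_one_dilate (K : SchwartzMap (Rn n) ℝ) (j : ℤ) :
    eLpNorm (dilate K j) 1 volume = eLpNorm K 1 volume := by
  simp [eLpNorm_dilate]

lemma exists_norm_le (f : SchwartzMap (Rn n) ℝ) : ∃ M : ℝ, ∀ x, ‖f x‖ ≤ M :=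
  ⟨SchwartzMap.seminorm ℝ 0 0 f, SchwartzMap.norm_le_seminorm ℝ f⟩

lemma norm_schwartzConv_dilate_le (K f : SchwartzMap (Rn n) ℝ) {M : ℝ} (hM : ∀ x, ‖f x‖ ≤ M)
    (j : ℤ) (x : Rn n) : ‖schwartzConv (dilate K j) f x‖ ≤ (∫ u, ‖K u‖) * M := by
  rw [schwartzConv_dilate_apply, ← integral_mul_const]
  refine norm_integral_le_of_norm_le (K.integrable.norm.mul_const M)
    (Eventually.of_forall fun u => ?_)
  rw [norm_mul]
  gcongr
  exact hM _

lemma tendsto_schwartzConv_dilate {K : SchwartzMap (Rn n) ℝ} (hK : ∫ x, K x = 1)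
    (f : SchwartzMap (Rn n) ℝ) (x : Rn n) :
    Tendsto (fun j : ℕ => schwartzConv (dilate K j) f x) atTop (nhds (f x)) := by
  obtain ⟨M, hM⟩ := exists_norm_le f
  have hfx : f x = ∫ u, K u * f x := by rw [integral_mul_const, hK, one_mul]
  have hscale : Tendsto (fun j : ℕ => (2 : ℝ) ^ (-(j : ℤ))) atTop (nhds 0) := by
    simpa [Function.comp_def] using
      tendsto_inv_atTop_zero.comp (tendsto_pow_atTop_atTop_of_one_lt one_lt_two)
  rw [hfx]
  simp_rw [schwartzConv_dilate_apply]
  refine tendsto_integral_of_dominated_convergence (fun u => ‖K u‖ * M) (fun j => ?_)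
    (K.integrable.norm.mul_const M) (fun j => Eventually.of_forall fun u => ?_)
    (Eventually.of_forall fun u => ?_)
  · exact (by fun_prop : Continuous fun u => K u * f (x - (2 : ℝ) ^ (-(j : ℤ)) • u))
      |>.aestronglyMeasurable
  · rw [norm_mul]
    gcongr
    exact hM _
  · have hshift : Tendsto (fun j : ℕ => x - (2 : ℝ) ^ (-(j : ℤ)) • u) atTop (nhds x) := by
      simpa using (hscale.smul_const u).const_sub x
    exact ((f.continuous.tendsto x).comp hshift).const_mul _

lemma tendsto_schwartzConv_of_bounded (K : SchwartzMap (Rn n) ℝ) {h : SchwartzMap (Rn n) ℝ}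
    {P : ℕ → SchwartzMap (Rn n) ℝ} {M : ℝ} (hM : ∀ N x, ‖P N x‖ ≤ M)
    (hP : ∀ x, Tendsto (fun N => P N x) atTop (nhds (h x))) (x : Rn n) :
    Tendsto (fun N => schwartzConv K (P N) x) atTop (nhds (schwartzConv K h x)) := by
  simp_rw [coe_schwartzConv, MeasureTheory.convolution, ContinuousLinearMap.mul_apply']
  refine tendsto_integral_of_dominated_convergence (fun u => ‖K u‖ * M) (fun N => ?_)
    (K.integrable.norm.mul_const M) (fun N => Eventually.of_forall fun u => ?_)
    (Eventually.of_forall fun u => (hP _).const_mul _)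
  · exact (by fun_prop : Continuous fun u => K u * P N (x - u)).aestronglyMeasurable
  · rw [norm_mul]
    gcongr
    exact hM _ _

end Schwartz

section LittlewoodPaley

/-- `f` is bandlimited to radius `R`: its Fourier transform vanishes outside the open ball of
radius `R` about the origin. -/
def IsBandlimited (f : SchwartzMap (Rn n) ℝ) (R : ℝ) : Prop :=
  ∀ ξ, R ≤ ‖ξ‖ → ftC f ξ = 0

namespace IsBandlimited

variable {f g : SchwartzMap (Rn n) ℝ} {a b : ℝ}

lemma mono (hf : IsBandlimited f a) (hab : a ≤ b) : IsBandlimited f b :=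
  fun ξ hξ => hf ξ (hab.trans hξ)

lemma add (hf : IsBandlimited f a) (hg : IsBandlimited g a) : IsBandlimited (f + g) a :=
  fun ξ hξ => by rw [ftC_add, Pi.add_apply, hf ξ hξ, hg ξ hξ, add_zero]

lemma sum {ι : Type*} {t : Finset ι} {u : ι → SchwartzMap (Rn n) ℝ}
    (hu : ∀ i ∈ t, IsBandlimited (u i) a) : IsBandlimited (∑ i ∈ t, u i) a :=
  Finset.sum_induction u (IsBandlimited · a) (fun _ _ => add)
    (fun ξ _ => congrFun ftC_zero ξ) hu

lemma schwartzConv (hf : IsBandlimited f a) (g : SchwartzMap (Rn n) ℝ) :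
    IsBandlimited (schwartzConv f g) a :=
  fun ξ hξ => by rw [ftC_schwartzConv, Pi.mul_apply, hf ξ hξ, zero_mul]

lemma schwartzMul (hf : IsBandlimited f a) (hg : IsBandlimited g b) :
    IsBandlimited (schwartzMul f g) (a + b) := by
  intro ξ hξ
  rw [ftC_schwartzMul]
  refine integral_eq_zero_of_ae (Eventually.of_forall fun η => ?_)
  refine mul_eq_zero.2 ?_
  by_contra! h
  have hη : ‖η‖ < a := not_le.1 fun ha => h.1 (hf η ha)
  have hξη : ‖ξ - η‖ < b := not_le.1 fun hb => h.2 (hg (ξ - η) hb)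
  linarith [norm_sub_norm_le ξ η]

lemma dilate (hf : IsBandlimited f a) (j : ℤ) : IsBandlimited (dilate f j) (2 ^ j * a) := by
  intro ξ hξ
  rw [ftC_dilate]
  refine hf _ ?_
  rwa [norm_smul, norm_zpow, Real.norm_ofNat, zpow_neg, ← div_eq_inv_mul,
    le_div_iff₀' (by positivity)]

end IsBandlimited

variable {ψ₀ Ψ : SchwartzMap (Rn n) ℝ}

lemma norm_two_zpow_smul (j : ℤ) (ξ : Rn n) : ‖(2 : ℝ) ^ j • ξ‖ = 2 ^ j * ‖ξ‖ := by
  rw [norm_smul, norm_zpow, Real.norm_ofNat]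

lemma norm_two_zpow_smul_le_half {j : ℤ} {ξ : Rn n} (hξ : ‖ξ‖ ≤ 2 ^ j) :
    ‖(2 : ℝ) ^ (-(j + 1)) • ξ‖ ≤ 1 / 2 := by
  calc ‖(2 : ℝ) ^ (-(j + 1)) • ξ‖ ≤ 2 ^ (-(j + 1)) * 2 ^ j := by
        rw [norm_two_zpow_smul]
        gcongr
    _ = 1 / 2 := by
        rw [← zpow_add₀ two_ne_zero, neg_add_rev, neg_add_cancel_right]
        norm_num

namespace IsLPF

lemma ftC_eq_zero_of_norm_le (hψ : IsLPF n ψ₀) {ξ : Rn n} (hξ : ‖ξ‖ ≤ 1 / 2) : ftC ψ₀ ξ = 0 :=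
  by_contra fun h => hξ.not_gt (hψ.ft_supp ξ h).1

lemma isBandlimited (hψ : IsLPF n ψ₀) : IsBandlimited ψ₀ 2 :=
  fun ξ hξ => by_contra fun h => hξ.not_gt (hψ.ft_supp ξ h).2

lemma ftC_lowPiece_eq_one (hψ : IsLPF n ψ₀) (hΨ : IsLowPiece ψ₀ Ψ) {ξ : Rn n}
    (hξ : ‖ξ‖ ≤ 1 / 2) : ftC Ψ ξ = 1 := by
  have hzero (k : ℕ) : ftC ψ₀ ((2 : ℝ) ^ (-(k : ℤ)) • ξ) = 0 := by
    refine hψ.ftC_eq_zero_of_norm_le ?_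
    rw [norm_two_zpow_smul]
    exact (mul_le_of_le_one_left (norm_nonneg ξ)
      (zpow_le_one_of_nonpos₀ one_le_two (by simp))).trans hξ
  simp only [hΨ ξ, hzero, tsum_zero, sub_zero]

lemma isBandlimited_lowPiece (hψ : IsLPF n ψ₀) (hΨ : IsLowPiece ψ₀ Ψ) : IsBandlimited Ψ 1 := by
  intro ξ hξ
  have hξ₀ : ξ ≠ 0 := norm_pos_iff.1 (one_pos.trans_le hξ)
  have hnat : HasSum (fun k : ℕ => ftC ψ₀ ((2 : ℝ) ^ (-(k : ℤ)) • ξ)) 1 := by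
    refine ((Nat.cast_injective (R := ℤ)).hasSum_iff (f := fun j : ℤ =>
      ftC ψ₀ ((2 : ℝ) ^ (-j) • ξ)) fun j hj => hψ.isBandlimited _ ?_).2 (hψ.ft_sum ξ hξ₀)
    have hj' : 1 ≤ -j := by
      by_contra h
      exact hj ⟨j.toNat, by simp; omega⟩
    calc (2 : ℝ) = 2 ^ (1 : ℤ) * 1 := by simp
      _ ≤ 2 ^ (-j) * ‖ξ‖ := by gcongr; exact one_le_two
      _ = ‖(2 : ℝ) ^ (-j) • ξ‖ := (norm_two_zpow_smul _ _).symm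
  rw [hΨ ξ, hnat.tsum_eq, sub_self]

lemma summable_ftC (hψ : IsLPF n ψ₀) (ξ : Rn n) :
    Summable fun k : ℕ => ftC ψ₀ ((2 : ℝ) ^ (-(k : ℤ)) • ξ) := by
  rcases eq_or_ne ξ 0 with rfl | hξ
  · simp [hψ.ftC_eq_zero_of_norm_le, summable_zero]
  · exact (hψ.ft_sum ξ hξ).summable.comp_injective (Nat.cast_injective (R := ℤ))

lemma dilate_lowPiece_succ (hψ : IsLPF n ψ₀) (hΨ : IsLowPiece ψ₀ Ψ) (j : ℤ) :
    dilate Ψ (j + 1) = dilate Ψ j + dilate ψ₀ j := by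
  refine ftC_injective (funext fun ξ => ?_)
  have hshift (k : ℕ) : (2 : ℝ) ^ (-(k : ℤ)) • (2 : ℝ) ^ (-(j + 1)) • ξ =
      (2 : ℝ) ^ (-((k + 1 : ℕ) : ℤ)) • (2 : ℝ) ^ (-j) • ξ := by
    rw [smul_smul, smul_smul, ← zpow_add₀ two_ne_zero, ← zpow_add₀ two_ne_zero]
    congr 2
    push_cast
    ring
  rw [ftC_add, Pi.add_apply, ftC_dilate, ftC_dilate, ftC_dilate, hΨ, hΨ,
    (hψ.summable_ftC ((2 : ℝ) ^ (-j) • ξ)).tsum_eq_zero_add]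
  simp only [hshift, Nat.cast_zero, neg_zero, zpow_zero, one_smul]
  ring

lemma integral_lowPiece (hψ : IsLPF n ψ₀) (hΨ : IsLowPiece ψ₀ Ψ) : ∫ x, Ψ x = 1 := by
  have h := hψ.ftC_lowPiece_eq_one hΨ (ξ := 0) (by simp)
  rw [ftC_apply_zero] at h
  exact_mod_cast h

lemma schwartzConv_dilate_lowPiece (hψ : IsLPF n ψ₀) (hΨ : IsLowPiece ψ₀ Ψ)
    {h : SchwartzMap (Rn n) ℝ} {j : ℤ} (hh : IsBandlimited h (2 ^ j)) :
    schwartzConv (dilate Ψ (j + 1)) h = h := by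
  refine ftC_injective (funext fun ξ => ?_)
  rw [ftC_schwartzConv, Pi.mul_apply]
  rcases le_total (2 ^ j) ‖ξ‖ with hξ | hξ
  · rw [hh ξ hξ, mul_zero]
  · rw [ftC_dilate, hψ.ftC_lowPiece_eq_one hΨ (norm_two_zpow_smul_le_half hξ), one_mul]

lemma schwartzConv_dilate_eq_zero (hψ : IsLPF n ψ₀) {h : SchwartzMap (Rn n) ℝ} {j : ℤ}
    (hh : IsBandlimited h (2 ^ j)) : schwartzConv (dilate ψ₀ (j + 1)) h = 0 := by
  refine ftC_injective (funext fun ξ => ?_)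
  rw [ftC_schwartzConv, ftC_zero, Pi.mul_apply, Pi.zero_apply]
  rcases le_total (2 ^ j) ‖ξ‖ with hξ | hξ
  · rw [hh ξ hξ, mul_zero]
  · rw [ftC_dilate, hψ.ftC_eq_zero_of_norm_le (norm_two_zpow_smul_le_half hξ), zero_mul]

end IsLPF

/-- The kernel of the `j`-th inhomogeneous Littlewood–Paley block, with index shifted by one so
that `lpBlock ψ₀ Ψ 0 = Ψ` and `lpBlock ψ₀ Ψ (j + 1) = ψ_j`. -/
def lpBlock (ψ₀ Ψ : SchwartzMap (Rn n) ℝ) : ℕ → SchwartzMap (Rn n) ℝ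
  | 0 => Ψ
  | j + 1 => dilate ψ₀ j

/-- The low-frequency part of `f`: the sum of its first `N` inhomogeneous Littlewood–Paley
blocks. -/
def lowFreq (ψ₀ Ψ : SchwartzMap (Rn n) ℝ) (N : ℕ) (f : SchwartzMap (Rn n) ℝ) :
    SchwartzMap (Rn n) ℝ :=
  ∑ j ∈ Finset.range N, schwartzConv (lpBlock ψ₀ Ψ j) f

lemma lowFreq_succ (N : ℕ) (f : SchwartzMap (Rn n) ℝ) :
    lowFreq ψ₀ Ψ (N + 1) f = lowFreq ψ₀ Ψ N f + schwartzConv (lpBlock ψ₀ Ψ N) f :=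
  Finset.sum_range_succ _ _

namespace IsLPF

lemma isBandlimited_lpBlock (hψ : IsLPF n ψ₀) (hΨ : IsLowPiece ψ₀ Ψ) (j : ℕ) :
    IsBandlimited (lpBlock ψ₀ Ψ j) (2 ^ j) := by
  cases j with
  | zero => simpa [lpBlock] using hψ.isBandlimited_lowPiece hΨ
  | succ j => simpa [lpBlock, pow_succ] using hψ.isBandlimited.dilate j

lemma isBandlimited_lowFreq (hψ : IsLPF n ψ₀) (hΨ : IsLowPiece ψ₀ Ψ) {N j : ℕ} (hN : N ≤ j + 1)
    (f : SchwartzMap (Rn n) ℝ) : IsBandlimited (lowFreq ψ₀ Ψ N f) (2 ^ j) := by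
  refine IsBandlimited.sum fun i hi => ((hψ.isBandlimited_lpBlock hΨ i).schwartzConv f).mono ?_
  exact pow_le_pow_right₀ one_le_two (Nat.lt_succ_iff.1 ((Finset.mem_range.1 hi).trans_le hN))

lemma lowFreq_succ_eq_schwartzConv (hψ : IsLPF n ψ₀) (hΨ : IsLowPiece ψ₀ Ψ) (N : ℕ)
    (f : SchwartzMap (Rn n) ℝ) : lowFreq ψ₀ Ψ (N + 1) f = schwartzConv (dilate Ψ N) f := by
  induction N with
  | zero => simp [lowFreq, lpBlock, dilate_zero]
  | succ N ih =>
    rw [lowFreq_succ, ih, Nat.cast_succ, hψ.dilate_lowPiece_succ hΨ, schwartzConv_add_left, lpBlock]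

lemma exists_norm_lowFreq_le (hψ : IsLPF n ψ₀) (hΨ : IsLowPiece ψ₀ Ψ) (f : SchwartzMap (Rn n) ℝ) :
    ∃ M : ℝ, ∀ N x, ‖lowFreq ψ₀ Ψ N f x‖ ≤ M := by
  obtain ⟨M, hM⟩ := exists_norm_le f
  have hM₀ : 0 ≤ M := (norm_nonneg _).trans (hM 0)
  refine ⟨(∫ u, ‖Ψ u‖) * M, fun N x => ?_⟩
  cases N with
  | zero => simpa [lowFreq] using mul_nonneg (integral_nonneg fun u => norm_nonneg (Ψ u)) hM₀
  | succ N =>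
    rw [hψ.lowFreq_succ_eq_schwartzConv hΨ]
    exact norm_schwartzConv_dilate_le Ψ f hM N x

lemma tendsto_lowFreq (hψ : IsLPF n ψ₀) (hΨ : IsLowPiece ψ₀ Ψ) (f : SchwartzMap (Rn n) ℝ)
    (x : Rn n) : Tendsto (fun N => lowFreq ψ₀ Ψ N f x) atTop (nhds (f x)) := by
  rw [← tendsto_add_atTop_iff_nat 1]
  simp only [hψ.lowFreq_succ_eq_schwartzConv hΨ]
  exact tendsto_schwartzConv_dilate (hψ.integral_lowPiece hΨ) f x

end IsLPF

end LittlewoodPaley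

section Besov

variable {ψ₀ Ψ : SchwartzMap (Rn n) ℝ} {s : ℝ} {p q : ℝ≥0∞}

lemma eLpNorm_schwartzConv_dilate_le (K f : SchwartzMap (Rn n) ℝ) (j : ℤ) (hp : 1 ≤ p) :
    eLpNorm (schwartzConv (dilate K j) f) p volume ≤
      eLpNorm K 1 volume * eLpNorm f p volume := by
  rw [coe_schwartzConv, ← eLpNorm_one_dilate K j]
  exact eLpNorm_convolution_mul_le (dilate K j).continuous.measurable f.continuous.measurable hp

lemma eLpNorm_top_schwartzConv_dilate_le (K f : SchwartzMap (Rn n) ℝ) (j : ℤ) (a b : ℝ≥0∞)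
    [hab : ENNReal.HolderConjugate b a] :
    eLpNorm (schwartzConv (dilate K j) f) ∞ volume ≤
      2 ^ (j * n * (a⁻¹).toReal) * (eLpNorm K b volume * eLpNorm f a volume) := by
  have hb : 1 - (b⁻¹).toReal = (a⁻¹).toReal := by
    have hsum := congrArg ENNReal.toReal (ENNReal.HolderConjugate.inv_add_inv_eq_one b a)
    rw [ENNReal.toReal_add (ENNReal.inv_ne_top.2 (ENNReal.HolderConjugate.ne_zero b a))
      (ENNReal.inv_ne_top.2 (ENNReal.HolderConjugate.ne_zero a b)), ENNReal.toReal_one] at hsum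
    linarith
  rw [← mul_assoc, ← hb, ← eLpNorm_dilate, eLpNorm_exponent_top, coe_schwartzConv]
  exact eLpNormEssSup_le_of_ae_enorm_bound (Eventually.of_forall fun x =>
    enorm_convolution_mul_le_eLpNorm_mul_eLpNorm (dilate K j).continuous.measurable
      f.continuous.measurable x)

lemma toReal_inv_mul_one_sub_toReal_div {a r : ℝ≥0∞} (ha : a ≠ 0) (har : a ≤ r) :
    (a⁻¹).toReal * (1 - (a / r).toReal) = (a⁻¹).toReal - (r⁻¹).toReal := by
  rcases eq_or_ne a ∞ with rfl | ha_top
  · simp [top_le_iff.1 har]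
  · rw [mul_one_sub, ← ENNReal.toReal_mul, div_eq_mul_inv, ← mul_assoc,
      ENNReal.inv_mul_cancel ha ha_top, one_mul]

/-- **Bernstein's inequality**. -/
theorem exists_eLpNorm_schwartzConv_dilate_le (K : SchwartzMap (Rn n) ℝ) {a r : ℝ≥0∞}
    (ha : 1 ≤ a) (har : a ≤ r) :
    ∃ C ≠ ∞, ∀ (j : ℤ) (f : SchwartzMap (Rn n) ℝ),
      eLpNorm (schwartzConv (dilate K j) f) r volume ≤
        C * 2 ^ (j * (n * ((a⁻¹).toReal - (r⁻¹).toReal))) * eLpNorm f a volume := by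
  have ha₀ : a ≠ 0 := (zero_lt_one.trans_le ha).ne'
  obtain ⟨b, hb⟩ : ∃ b, ENNReal.HolderConjugate b a :=
    ⟨_, (ENNReal.HolderConjugate.conjExponent ha).symm⟩
  set θ := (a / r).toReal
  have hθ₀ : 0 ≤ θ := ENNReal.toReal_nonneg
  have hθ₁ : 0 ≤ 1 - θ :=
    sub_nonneg.2 (ENNReal.toReal_le_of_le_ofReal zero_le_one
      (by simpa using ENNReal.div_le_of_le_mul (by simpa using har)))
  refine ⟨eLpNorm K b volume ^ (1 - θ) * eLpNorm K 1 volume ^ θ,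
    ENNReal.mul_ne_top (ENNReal.rpow_ne_top_of_nonneg hθ₁ (K.eLpNorm_lt_top b volume).ne)
      (ENNReal.rpow_ne_top_of_nonneg hθ₀ (K.eLpNorm_lt_top 1 volume).ne), fun j f => ?_⟩
  calc eLpNorm (schwartzConv (dilate K j) f) r volume
      ≤ eLpNorm (schwartzConv (dilate K j) f) ∞ volume ^ (1 - θ) *
          eLpNorm (schwartzConv (dilate K j) f) a volume ^ θ :=
        eLpNorm_le_eLpNorm_top_rpow_mul
          (schwartzConv (dilate K j) f).continuous.aestronglyMeasurable ha₀ har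
    _ ≤ (2 ^ (j * n * (a⁻¹).toReal) * (eLpNorm K b volume * eLpNorm f a volume)) ^ (1 - θ) *
          (eLpNorm K 1 volume * eLpNorm f a volume) ^ θ := by
        gcongr
        · exact eLpNorm_top_schwartzConv_dilate_le K f j a b
        · exact eLpNorm_schwartzConv_dilate_le K f j ha
    _ = eLpNorm K b volume ^ (1 - θ) * eLpNorm K 1 volume ^ θ *
          2 ^ (j * n * (a⁻¹).toReal * (1 - θ)) *
            (eLpNorm f a volume ^ (1 - θ) * eLpNorm f a volume ^ θ) := by
        simp only [ENNReal.mul_rpow_of_nonneg _ _ hθ₁, ENNReal.mul_rpow_of_nonneg _ _ hθ₀,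
          ← ENNReal.rpow_mul]
        ring
    _ = _ := by
        rw [← ENNReal.rpow_add_of_nonneg _ _ hθ₁ hθ₀, sub_add_cancel, ENNReal.rpow_one,
          mul_assoc (j * n : ℝ),
          toReal_inv_mul_one_sub_toReal_div ha₀ har, mul_assoc (j : ℝ)]

/-- The weighted `ℓ^q(L^p)` norm `‖(2^{js} ‖u_j‖_{L^p})_j‖_{ℓ^q}` of a sequence of Schwartz
functions, written as an `eLpNorm` for the counting measure. -/
def besovSeqNorm (s : ℝ) (p q : ℝ≥0∞) (u : ℕ → SchwartzMap (Rn n) ℝ) : ℝ≥0∞ :=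
  eLpNorm (fun j : ℕ => (2 : ℝ≥0∞) ^ (j * s) * eLpNorm (u j) p volume) q Measure.count

lemma eLpNorm_le_two_rpow_mul_besovSeqNorm (hq : 1 ≤ q) (u : ℕ → SchwartzMap (Rn n) ℝ) (j : ℕ) :
    eLpNorm (u j) p volume ≤ 2 ^ (j * -s) * besovSeqNorm s p q u := by
  calc eLpNorm (u j) p volume
      = 2 ^ (j * -s) * (2 ^ (j * s) * eLpNorm (u j) p volume) := by
        rw [← mul_assoc, ← two_rpow_add, mul_neg, neg_add_cancel, ENNReal.rpow_zero, one_mul]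
    _ ≤ 2 ^ (j * -s) * besovSeqNorm s p q u := by
        gcongr
        exact enorm_le_eLpNorm_count (fun j : ℕ => (2 : ℝ≥0∞) ^ (j * s) * eLpNorm (u j) p volume)
          j (zero_lt_one.trans_le hq).ne'

lemma besovSeqNorm_le_add (hq : 1 ≤ q) {p₁ p₂ c d : ℝ≥0∞} {u v w : ℕ → SchwartzMap (Rn n) ℝ}
    (h : ∀ j, eLpNorm (u j) p volume ≤
      c * eLpNorm (v j) p₁ volume + d * eLpNorm (w j) p₂ volume) :
    besovSeqNorm s p q u ≤ c * besovSeqNorm s p₁ q v + d * besovSeqNorm s p₂ q w := by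
  have hmeas (b : ℕ → ℝ≥0∞) : AEStronglyMeasurable b Measure.count :=
    (measurable_of_countable b).aestronglyMeasurable
  calc besovSeqNorm s p q u
      ≤ eLpNorm ((fun j : ℕ => c * (2 ^ (j * s) * eLpNorm (v j) p₁ volume)) +
          fun j : ℕ => d * (2 ^ (j * s) * eLpNorm (w j) p₂ volume)) q Measure.count := by
        refine eLpNorm_mono_enorm fun j => ?_
        rw [enorm_eq_self, enorm_eq_self, Pi.add_apply, mul_left_comm c, mul_left_comm d, ← mul_add]
        gcongr
        exact h j
    _ ≤ _ := (eLpNorm_add_le (hmeas _) (hmeas _) hq).trans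
        (add_le_add (eLpNorm_const_mul_le c (hmeas _).aemeasurable q)
          (eLpNorm_const_mul_le d (hmeas _).aemeasurable q))

lemma besovNorm_eq_add_besovSeqNorm (hq : q ≠ 0) (f : SchwartzMap (Rn n) ℝ) :
    besovNorm ψ₀ Ψ s p q f = eLpNorm (schwartzConv Ψ f) p volume +
      besovSeqNorm s p q fun j => schwartzConv (dilate ψ₀ j) f := by
  simp only [besovNorm, besovSeqNorm, lpProj, ← coe_dilate, ← coe_schwartzConv, ofReal_two_rpow]
  congr 1
  split_ifs with hq_top
  · rw [hq_top, eLpNorm_top_count_eq_iSup]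
  · rw [eLpNorm_count_eq_tsum _ hq hq_top]

lemma besovSeqNorm_lpBlock_le (hs : 0 ≤ s) (hq : 1 ≤ q) (f : SchwartzMap (Rn n) ℝ) :
    besovSeqNorm s p q (fun j => schwartzConv (lpBlock ψ₀ Ψ j) f) ≤
      2 ^ s * besovNorm ψ₀ Ψ s p q f := by
  have h2s : 1 ≤ (2 : ℝ≥0∞) ^ s := by
    simpa using ENNReal.rpow_le_rpow_of_exponent_le one_le_two hs
  rw [besovNorm_eq_add_besovSeqNorm (zero_lt_one.trans_le hq).ne', mul_add]
  refine (eLpNorm_count_le_add_eLpNorm_succ _ hq).trans (add_le_add ?_ ?_)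
  · simpa [lpBlock] using le_mul_of_one_le_left' h2s
  · refine le_trans (eLpNorm_mono_enorm fun j => ?_) (eLpNorm_const_mul_le _
      (measurable_of_countable _).aemeasurable q)
    rw [enorm_eq_self, enorm_eq_self, ← mul_assoc, ← two_rpow_add, Nat.cast_succ, add_one_mul,
      add_comm s]
    rfl

end Besov

section Series

variable {ψ₀ Ψ h : SchwartzMap (Rn n) ℝ} {u : ℕ → SchwartzMap (Rn n) ℝ} {M s : ℝ} {p q : ℝ≥0∞}

lemma eLpNorm_schwartzConv_le_tsum (hp : 1 ≤ p) (K : SchwartzMap (Rn n) ℝ)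
    (hM : ∀ N x, ‖(∑ j ∈ Finset.range N, u j) x‖ ≤ M)
    (hu : ∀ x, Tendsto (fun N => (∑ j ∈ Finset.range N, u j) x) atTop (nhds (h x))) :
    eLpNorm (schwartzConv K h) p volume ≤ ∑' j, eLpNorm (schwartzConv K (u j)) p volume := by
  have hpartial (N : ℕ) : eLpNorm (schwartzConv K (∑ j ∈ Finset.range N, u j)) p volume ≤
      ∑' j, eLpNorm (schwartzConv K (u j)) p volume := by
    rw [schwartzConv_sum_right, FunLike.coe_sum]
    exact (eLpNorm_sum_le (fun j _ => (schwartzConv K (u j)).continuous.aestronglyMeasurable)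
      hp).trans (ENNReal.sum_le_tsum _)
  calc eLpNorm (schwartzConv K h) p volume
      ≤ liminf (fun N => eLpNorm (schwartzConv K (∑ j ∈ Finset.range N, u j)) p volume) atTop :=
        Lp.eLpNorm_lim_le_liminf_eLpNorm
          (fun N => (schwartzConv K _).continuous.aestronglyMeasurable) _
          (Eventually.of_forall (tendsto_schwartzConv_of_bounded K hM hu))
    _ ≤ liminf (fun _ : ℕ => ∑' j, eLpNorm (schwartzConv K (u j)) p volume) atTop :=
        liminf_le_liminf (Eventually.of_forall hpartial)
    _ = ∑' j, eLpNorm (schwartzConv K (u j)) p volume := liminf_const _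

lemma two_rpow_mul_eLpNorm_schwartzConv_le (hψ : IsLPF n ψ₀) (hp : 1 ≤ p) {j : ℕ}
    {v : SchwartzMap (Rn n) ℝ} (hv : IsBandlimited v (2 ^ (j + 1))) (k : ℕ) :
    2 ^ (k * s) * eLpNorm (schwartzConv (dilate ψ₀ k) v) p volume ≤
      eLpNorm ψ₀ 1 volume * (decayWeight s (j - k) * (2 ^ (j * s) * eLpNorm v p volume)) := by
  by_cases hjk : (-1 : ℤ) ≤ j - k
  · have hpow : (2 : ℝ≥0∞) ^ (k * s) = 2 ^ (-(j - k : ℤ) * s) * 2 ^ (j * s) := by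
      rw [← two_rpow_add]
      congr 1
      push_cast
      ring
    rw [decayWeight, if_pos hjk, hpow, ← mul_assoc _ _ (eLpNorm v p volume), mul_left_comm]
    gcongr
    exact eLpNorm_schwartzConv_dilate_le ψ₀ v k hp
  · have hv' : IsBandlimited v (2 ^ (k - 1 : ℤ)) := hv.mono <| by
      rw [← zpow_natCast]
      exact zpow_le_zpow_right₀ one_le_two (by push_cast; omega)
    have hzero := hψ.schwartzConv_dilate_eq_zero hv'
    rw [sub_add_cancel] at hzero
    simp [hzero]

lemma besovSeqNorm_schwartzConv_le (hψ : IsLPF n ψ₀) (hp : 1 ≤ p) (hq : 1 ≤ q)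
    (hband : ∀ j, IsBandlimited (u j) (2 ^ (j + 1)))
    (hM : ∀ N x, ‖(∑ j ∈ Finset.range N, u j) x‖ ≤ M)
    (hu : ∀ x, Tendsto (fun N => (∑ j ∈ Finset.range N, u j) x) atTop (nhds (h x))) :
    besovSeqNorm s p q (fun k => schwartzConv (dilate ψ₀ k) h) ≤
      eLpNorm ψ₀ 1 volume * (∑' z, decayWeight s z) * besovSeqNorm s p q u := by
  set b : ℕ → ℝ≥0∞ := fun j => 2 ^ (j * s) * eLpNorm (u j) p volume
  calc besovSeqNorm s p q (fun k => schwartzConv (dilate ψ₀ k) h)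
      ≤ eLpNorm (fun k : ℕ => eLpNorm ψ₀ 1 volume * ∑' j : ℕ, decayWeight s (j - k) * b j) q
          Measure.count := by
        refine eLpNorm_mono_enorm fun k => ?_
        rw [enorm_eq_self, enorm_eq_self, ← ENNReal.tsum_mul_left]
        refine le_trans ?_ (ENNReal.tsum_le_tsum fun j =>
          two_rpow_mul_eLpNorm_schwartzConv_le hψ hp (hband j) k)
        rw [ENNReal.tsum_mul_left]
        gcongr
        exact eLpNorm_schwartzConv_le_tsum hp _ hM hu
    _ ≤ eLpNorm ψ₀ 1 volume * ((∑' z, decayWeight s z) * eLpNorm b q Measure.count) :=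
        (eLpNorm_const_mul_le _ (measurable_of_countable _).aemeasurable q).trans
          (by gcongr; exact eLpNorm_count_tsum_int_sub_le _ b hq)
    _ = _ := (mul_assoc _ _ _).symm

lemma eLpNorm_schwartzConv_le_mul_besovSeqNorm (hp : 1 ≤ p) (hq : 1 ≤ q)
    (K : SchwartzMap (Rn n) ℝ) (hM : ∀ N x, ‖(∑ j ∈ Finset.range N, u j) x‖ ≤ M)
    (hu : ∀ x, Tendsto (fun N => (∑ j ∈ Finset.range N, u j) x) atTop (nhds (h x))) :
    eLpNorm (schwartzConv K h) p volume ≤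
      eLpNorm K 1 volume * (∑' j : ℕ, 2 ^ (j * -s)) * besovSeqNorm s p q u := by
  rw [mul_assoc, ← ENNReal.tsum_mul_right, ← ENNReal.tsum_mul_left]
  refine (eLpNorm_schwartzConv_le_tsum hp K hM hu).trans (ENNReal.tsum_le_tsum fun j => ?_)
  calc eLpNorm (schwartzConv K (u j)) p volume ≤ eLpNorm K 1 volume * eLpNorm (u j) p volume := by
        simpa only [dilate_zero] using eLpNorm_schwartzConv_dilate_le K (u j) 0 hp
    _ ≤ _ := by
        gcongr
        exact eLpNorm_le_two_rpow_mul_besovSeqNorm hq u j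

/-- Since `s > 0`, the spectra may lie in balls rather than annuli. -/
theorem exists_besovNorm_le_mul_besovSeqNorm (hψ : IsLPF n ψ₀) (Ψ : SchwartzMap (Rn n) ℝ)
    (hs : 0 < s) (hp : 1 ≤ p) (hq : 1 ≤ q) :
    ∃ C ≠ ∞, ∀ (h : SchwartzMap (Rn n) ℝ) (u : ℕ → SchwartzMap (Rn n) ℝ) (M : ℝ),
      (∀ j, IsBandlimited (u j) (2 ^ (j + 1))) →
      (∀ N x, ‖(∑ j ∈ Finset.range N, u j) x‖ ≤ M) →
      (∀ x, Tendsto (fun N => (∑ j ∈ Finset.range N, u j) x) atTop (nhds (h x))) →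
      besovNorm ψ₀ Ψ s p q h ≤ C * besovSeqNorm s p q u := by
  refine ⟨eLpNorm Ψ 1 volume * (∑' j : ℕ, 2 ^ (j * -s)) +
    eLpNorm ψ₀ 1 volume * ∑' z, decayWeight s z, ?_, fun h u M hband hM hu => ?_⟩
  · exact ENNReal.add_ne_top.2
      ⟨ENNReal.mul_ne_top (Ψ.eLpNorm_lt_top 1 volume).ne
        (tsum_two_rpow_mul_ne_top (neg_lt_zero.2 hs)),
      ENNReal.mul_ne_top (ψ₀.eLpNorm_lt_top 1 volume).ne (tsum_decayWeight_ne_top hs)⟩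
  · rw [besovNorm_eq_add_besovSeqNorm (zero_lt_one.trans_le hq).ne', add_mul]
    exact add_le_add (eLpNorm_schwartzConv_le_mul_besovSeqNorm hp hq Ψ hM hu)
      (besovSeqNorm_schwartzConv_le hψ hp hq hband hM hu)

end Series

section Product

variable {ψ₀ Ψ : SchwartzMap (Rn n) ℝ} {s : ℝ} {p p₁ q r : ℝ≥0∞}

/-- The `j`-th term `S_{j+1} f · Δ_j g + S_j g · Δ_j f` of the telescoped product
`f g = lim (S_N f · S_N g)`, where `Δ_j` is the `j`-th inhomogeneous block and `S_N` the sum of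
the first `N` of them. -/
def paraproductTerm (ψ₀ Ψ f g : SchwartzMap (Rn n) ℝ) (j : ℕ) : SchwartzMap (Rn n) ℝ :=
  schwartzMul (lowFreq ψ₀ Ψ (j + 1) f) (schwartzConv (lpBlock ψ₀ Ψ j) g) +
    schwartzMul (lowFreq ψ₀ Ψ j g) (schwartzConv (lpBlock ψ₀ Ψ j) f)

lemma isBandlimited_paraproductTerm (hψ : IsLPF n ψ₀) (hΨ : IsLowPiece ψ₀ Ψ)
    (f g : SchwartzMap (Rn n) ℝ) (j : ℕ) :
    IsBandlimited (paraproductTerm ψ₀ Ψ f g j) (2 ^ (j + 1)) := by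
  rw [pow_succ, mul_two]
  exact ((hψ.isBandlimited_lowFreq hΨ le_rfl f).schwartzMul
      ((hψ.isBandlimited_lpBlock hΨ j).schwartzConv g)).add
    ((hψ.isBandlimited_lowFreq hΨ j.le_succ g).schwartzMul
      ((hψ.isBandlimited_lpBlock hΨ j).schwartzConv f))

lemma sum_paraproductTerm_apply (f g : SchwartzMap (Rn n) ℝ) (N : ℕ) (x : Rn n) :
    (∑ j ∈ Finset.range N, paraproductTerm ψ₀ Ψ f g j) x =
      lowFreq ψ₀ Ψ N f x * lowFreq ψ₀ Ψ N g x := by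
  induction N with
  | zero => simp [lowFreq]
  | succ N ih =>
    rw [Finset.sum_range_succ, add_apply, ih, paraproductTerm, add_apply,
      coe_schwartzMul, coe_schwartzMul, lowFreq_succ, lowFreq_succ]
    simp only [Pi.mul_apply, add_apply]
    ring

lemma exists_norm_sum_paraproductTerm_le (hψ : IsLPF n ψ₀) (hΨ : IsLowPiece ψ₀ Ψ)
    (f g : SchwartzMap (Rn n) ℝ) :
    ∃ M : ℝ, ∀ N x, ‖(∑ j ∈ Finset.range N, paraproductTerm ψ₀ Ψ f g j) x‖ ≤ M := by
  obtain ⟨A, hA⟩ := hψ.exists_norm_lowFreq_le hΨ f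
  obtain ⟨B, hB⟩ := hψ.exists_norm_lowFreq_le hΨ g
  refine ⟨A * B, fun N x => ?_⟩
  rw [sum_paraproductTerm_apply]
  exact norm_mul_le_of_le (hA N x) (hB N x)

lemma tendsto_sum_paraproductTerm (hψ : IsLPF n ψ₀) (hΨ : IsLowPiece ψ₀ Ψ)
    (f g : SchwartzMap (Rn n) ℝ) (x : Rn n) :
    Tendsto (fun N => (∑ j ∈ Finset.range N, paraproductTerm ψ₀ Ψ f g j) x) atTop
      (nhds (schwartzMul f g x)) := by
  simp only [sum_paraproductTerm_apply]
  exact (hψ.tendsto_lowFreq hΨ f x).mul (hψ.tendsto_lowFreq hΨ g x)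

lemma eLpNorm_schwartzMul_le [ENNReal.HolderTriple r p₁ p] (f g : SchwartzMap (Rn n) ℝ) :
    eLpNorm (schwartzMul f g) p volume ≤ eLpNorm f r volume * eLpNorm g p₁ volume := by
  rw [coe_schwartzMul, ← smul_eq_mul]
  exact eLpNorm_smul_le_mul_eLpNorm g.continuous.aestronglyMeasurable
    f.continuous.aestronglyMeasurable

lemma eLpNorm_paraproductTerm_le [ENNReal.HolderTriple r p₁ p] (hp : 1 ≤ p)
    {f g : SchwartzMap (Rn n) ℝ} {A B : ℝ≥0∞}
    (hA : ∀ N, eLpNorm (lowFreq ψ₀ Ψ N f) r volume ≤ A)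
    (hB : ∀ N, eLpNorm (lowFreq ψ₀ Ψ N g) r volume ≤ B) (j : ℕ) :
    eLpNorm (paraproductTerm ψ₀ Ψ f g j) p volume ≤
      A * eLpNorm (schwartzConv (lpBlock ψ₀ Ψ j) g) p₁ volume +
        B * eLpNorm (schwartzConv (lpBlock ψ₀ Ψ j) f) p₁ volume := by
  refine (eLpNorm_add_le (schwartzMul _ _).continuous.aestronglyMeasurable
    (schwartzMul _ _).continuous.aestronglyMeasurable hp).trans (add_le_add ?_ ?_)
  · exact (eLpNorm_schwartzMul_le _ _).trans (by gcongr; exact hA _)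
  · exact (eLpNorm_schwartzMul_le _ _).trans (by gcongr; exact hB _)

lemma exists_eLpNorm_lpBlock_le (hψ : IsLPF n ψ₀) (hΨ : IsLowPiece ψ₀ Ψ) (hs : 0 ≤ s)
    (hq : 1 ≤ q) {a : ℝ≥0∞} (ha : 1 ≤ a) (har : a ≤ r) :
    ∃ C ≠ ∞, ∀ (j : ℕ) (f : SchwartzMap (Rn n) ℝ),
      eLpNorm (schwartzConv (lpBlock ψ₀ Ψ j) f) r volume ≤
        C * besovNorm ψ₀ Ψ s a q f * 2 ^ (j * (n * ((a⁻¹).toReal - (r⁻¹).toReal) - s)) := by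
  obtain ⟨B, hB, hbernstein⟩ := exists_eLpNorm_schwartzConv_dilate_le Ψ ha har
  generalize (n * ((a⁻¹).toReal - (r⁻¹).toReal) : ℝ) = σ at hbernstein ⊢
  refine ⟨B * 2 ^ (σ + s), ENNReal.mul_ne_top hB (two_rpow_ne_top _), fun j f => ?_⟩
  have hband : IsBandlimited (schwartzConv (lpBlock ψ₀ Ψ j) f) (2 ^ (j : ℤ)) := by
    simpa only [zpow_natCast] using (hψ.isBandlimited_lpBlock hΨ j).schwartzConv f
  have hsmooth : eLpNorm (schwartzConv (lpBlock ψ₀ Ψ j) f) a volume ≤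
      2 ^ (j * -s) * (2 ^ s * besovNorm ψ₀ Ψ s a q f) :=
    (eLpNorm_le_two_rpow_mul_besovSeqNorm hq (fun j => schwartzConv (lpBlock ψ₀ Ψ j) f) j).trans
      (mul_le_mul_right (besovSeqNorm_lpBlock_le hs hq f) _)
  have hexp : (2 : ℝ≥0∞) ^ (((j + 1 : ℤ) : ℝ) * σ) * (2 ^ (j * -s) * 2 ^ s) =
      2 ^ (σ + s) * 2 ^ (j * (σ - s)) := by
    simp only [← two_rpow_add]
    congr 1
    push_cast
    ring
  calc eLpNorm (schwartzConv (lpBlock ψ₀ Ψ j) f) r volume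
      ≤ B * 2 ^ (((j + 1 : ℤ) : ℝ) * σ) *
          eLpNorm (schwartzConv (lpBlock ψ₀ Ψ j) f) a volume := by
        conv_lhs => rw [← hψ.schwartzConv_dilate_lowPiece hΨ hband]
        exact hbernstein _ _
    _ ≤ B * 2 ^ (((j + 1 : ℤ) : ℝ) * σ) *
          (2 ^ (j * -s) * (2 ^ s * besovNorm ψ₀ Ψ s a q f)) := by
        gcongr
    _ = B * (2 ^ (((j + 1 : ℤ) : ℝ) * σ) * (2 ^ (j * -s) * 2 ^ s)) *
          besovNorm ψ₀ Ψ s a q f := by ring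
    _ = _ := by
        rw [hexp]
        ring

/-- **Sobolev embedding** `B^s_{a,q} ⊆ L^r`. -/
theorem exists_eLpNorm_lowFreq_le (hψ : IsLPF n ψ₀) (hΨ : IsLowPiece ψ₀ Ψ) (hs : 0 ≤ s)
    (hq : 1 ≤ q) {a : ℝ≥0∞} (ha : 1 ≤ a) (har : a ≤ r)
    (hsn : n * ((a⁻¹).toReal - (r⁻¹).toReal) < s) :
    ∃ C ≠ ∞, ∀ (N : ℕ) (f : SchwartzMap (Rn n) ℝ),
      eLpNorm (lowFreq ψ₀ Ψ N f) r volume ≤ C * besovNorm ψ₀ Ψ s a q f := by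
  obtain ⟨B, hB, hblock⟩ := exists_eLpNorm_lpBlock_le hψ hΨ hs hq ha har
  refine ⟨_, ENNReal.mul_ne_top hB (tsum_two_rpow_mul_ne_top (sub_neg.2 hsn)), fun N f => ?_⟩
  calc eLpNorm (lowFreq ψ₀ Ψ N f) r volume
      ≤ ∑ j ∈ Finset.range N, eLpNorm (schwartzConv (lpBlock ψ₀ Ψ j) f) r volume := by
        rw [lowFreq, FunLike.coe_sum]
        exact eLpNorm_sum_le (fun j _ => (schwartzConv _ f).continuous.aestronglyMeasurable)
          (ha.trans har)
    _ ≤ ∑' j : ℕ, B * besovNorm ψ₀ Ψ s a q f *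
          2 ^ (j * (n * ((a⁻¹).toReal - (r⁻¹).toReal) - s)) :=
        (Finset.sum_le_sum fun j _ => hblock j f).trans (ENNReal.sum_le_tsum _)
    _ = _ := by rw [ENNReal.tsum_mul_left, mul_right_comm]

lemma exists_holderTriple_of_le_two_mul (hp : p ≠ 0) (hpp₁ : p ≤ p₁) (hp₁ : p₁ ≤ 2 * p) :
    ∃ r, ENNReal.HolderTriple r p₁ p ∧ p₁ ≤ r ∧
      (r⁻¹).toReal = (p⁻¹).toReal - (p₁⁻¹).toReal := by
  have hinv : p₁⁻¹ ≤ p⁻¹ := ENNReal.inv_le_inv.2 hpp₁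
  refine ⟨(p⁻¹ - p₁⁻¹)⁻¹, ⟨by rw [inv_inv, tsub_add_cancel_of_le hinv]⟩, ?_, ?_⟩
  · rw [ENNReal.le_inv_iff_le_inv, tsub_le_iff_right, ← two_mul]
    calc p⁻¹ = 2 * (2 * p)⁻¹ := by
          rw [ENNReal.mul_inv (.inl two_ne_zero) (.inl ENNReal.ofNat_ne_top), ← mul_assoc,
            ENNReal.mul_inv_cancel two_ne_zero ENNReal.ofNat_ne_top, one_mul]
      _ ≤ 2 * p₁⁻¹ := by gcongr
  · rw [inv_inv, ENNReal.toReal_sub_of_le hinv (ENNReal.inv_ne_top.2 hp)]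

theorem besov_product_estimate_general (hψ : IsLPF n ψ₀) (hΨ : IsLowPiece ψ₀ Ψ) (hs : 0 < s)
    (hq : 1 ≤ q) (hp : 1 ≤ p) (hpp₁ : p ≤ p₁) (hp₁ : p₁ ≤ 2 * p)
    (hsn : n * (2 * (p₁⁻¹).toReal - (p⁻¹).toReal) < s) :
    ∃ C : ℝ, 0 < C ∧ ∀ f g : SchwartzMap (Rn n) ℝ,
      besovNorm ψ₀ Ψ s p q (fun x => f x * g x) ≤
        ENNReal.ofReal C * (besovNorm ψ₀ Ψ s p₁ q f * besovNorm ψ₀ Ψ s p₁ q g) := by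
  obtain ⟨r, _, hp₁r, hr⟩ :=
    exists_holderTriple_of_le_two_mul (zero_lt_one.trans_le hp).ne' hpp₁ hp₁
  obtain ⟨A, hA, hembed⟩ := exists_eLpNorm_lowFreq_le hψ hΨ hs.le hq (hp.trans hpp₁) hp₁r
    (by rw [hr]; convert hsn using 2; ring)
  obtain ⟨B, hB, hseries⟩ := exists_besovNorm_le_mul_besovSeqNorm hψ Ψ hs hp hq
  set C : ℝ≥0∞ := B * (2 * (A * 2 ^ s)) with hC
  have hC_top : C ≠ ∞ := ENNReal.mul_ne_top hB
    (ENNReal.mul_ne_top ENNReal.ofNat_ne_top (ENNReal.mul_ne_top hA (two_rpow_ne_top s)))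
  have hC_le : C ≤ ENNReal.ofReal (C.toReal + 1) :=
    (ENNReal.le_ofReal_iff_toReal_le hC_top (by positivity)).2 (by simp)
  refine ⟨C.toReal + 1, by positivity, fun f g => ?_⟩
  obtain ⟨M, hM⟩ := exists_norm_sum_paraproductTerm_le hψ hΨ f g
  calc besovNorm ψ₀ Ψ s p q (fun x => f x * g x)
      ≤ B * besovSeqNorm s p q (paraproductTerm ψ₀ Ψ f g) :=
        hseries (schwartzMul f g) _ M (isBandlimited_paraproductTerm hψ hΨ f g) hM
          (tendsto_sum_paraproductTerm hψ hΨ f g)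
    _ ≤ B * (A * besovNorm ψ₀ Ψ s p₁ q f * (2 ^ s * besovNorm ψ₀ Ψ s p₁ q g) +
          A * besovNorm ψ₀ Ψ s p₁ q g * (2 ^ s * besovNorm ψ₀ Ψ s p₁ q f)) := by
        gcongr
        refine (besovSeqNorm_le_add hq (eLpNorm_paraproductTerm_le (p₁ := p₁) hp (hembed · f)
          (hembed · g))).trans ?_
        gcongr <;> exact besovSeqNorm_lpBlock_le hs.le hq _
    _ = C * (besovNorm ψ₀ Ψ s p₁ q f * besovNorm ψ₀ Ψ s p₁ q g) := by rw [hC]; ring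
    _ ≤ _ := by gcongr

end Product

/-- Besov product estimate: if `s > 0`, `q ∈ [1,∞]`, `p, p₁ ∈ [1,∞)` with
`p < p₁ ≤ 2p` and `s > n(2/p₁ − 1/p)`, then
`‖fg‖_{B^s_{p,q}} ≤ C ‖f‖_{B^s_{p₁,q}} ‖g‖_{B^s_{p₁,q}}` for all Schwartz `f, g`. -/
theorem besov_product_estimate
    (n : ℕ) (hn : 1 ≤ n) (ψ₀ Ψ : SchwartzMap (Rn n) ℝ)
    (hψ : IsLPF n ψ₀) (hΨ : IsLowPiece ψ₀ Ψ)
    (s : ℝ) (hs : 0 < s) (q : ℝ≥0∞) (hq : 1 ≤ q)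
    (p p₁ : ℝ≥0∞) (hp1 : 1 ≤ p) (hpp₁ : p < p₁) (hp₁2p : p₁ ≤ 2 * p) (hp₁fin : p₁ < ∞)
    (hsn : (n:ℝ) * (2 / p₁.toReal - 1 / p.toReal) < s) :
    ∃ C : ℝ, 0 < C ∧ ∀ f g : SchwartzMap (Rn n) ℝ,
      besovNorm ψ₀ Ψ s p q (fun x => f x * g x)
        ≤ ENNReal.ofReal C *
          (besovNorm ψ₀ Ψ s p₁ q (fun x => f x) * besovNorm ψ₀ Ψ s p₁ q (fun x => g x)) :=
  besov_product_estimate_general hψ hΨ hs hq hp1 hpp₁.le hp₁2p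
    (by simpa only [ENNReal.toReal_inv, div_eq_mul_inv, one_mul] using hsn)
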